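/- Let X be an invertible n×n matrix over a field and i,j indices with i+j > n+1; set i' = n+1-i. Define Y_{ij} as the j×j matrix whose first i' rows are the last i' rows of X restricted to columns 1,…,j, and whose remaining j−i' rows are the last j−i' rows of adjugate(X) restricted to columns 1,…,j. Then for every upper unitriangular matrix g whose off-diagonal support lies in columns indexed above j (i.e., right multiplication by g does not mix columns 1,…,j nontrivially), det Y_{ij}(X·g) = det Y_{ij}(X). -/

import Mathlib

/-!
Let `U` be the adjugate of `g`. Since `adjugate (X * g) = U * adjugate X` and `U` is again upper
triangular, the last `q` rows of `adjugate (X * g)` are combinations of the last `q` rows of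
`adjugate X` only, with coefficient matrix the lower right `q × q` corner of `U`. The upper block
of `Y_{ij}` does not change, because `g` fixes the selected columns, so the passage from `X` to
`X * g` multiplies `Y_{ij}` on the left by a block diagonal matrix with blocks `1` and that corner.
The corner is inverse to the corresponding corner of `g`, which is unitriangular, so it has
determinant `1`.
-/

namespace StackedMatrix

open Matrix

theorem submatrix_mul_eq_left {R ι κ l o : Type*} [NonAssocSemiring R] [Fintype ι] [DecidableEq ι]
    (X : Matrix l ι R) {g : Matrix ι ι R} {c : o → ι}
    (hc : ∀ s t, g s (c t) = (1 : Matrix ι ι R) s (c t)) (r : κ → l) :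
    (X * g).submatrix r c = X.submatrix r c := by
  have hcols : g.submatrix id c = (1 : Matrix ι ι R).submatrix id c := Matrix.ext hc
  rw [submatrix_mul X g r id c Function.bijective_id, hcols,
    ← submatrix_mul X 1 r id c Function.bijective_id, Matrix.mul_one]

theorem submatrix_mul_of_isUpperSet_range {R ι κ l o : Type*} [NonUnitalNonAssocSemiring R]
    [Fintype ι] [LinearOrder ι] [Fintype κ] {U : Matrix ι ι R} (hU : U.IsUpperTriangular)
    {e : κ → ι} (he : Function.Injective e) (hrange : IsUpperSet (Set.range e))
    (B : Matrix ι l R) (c : o → l) :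
    (U * B).submatrix e c = U.submatrix e e * B.submatrix e c := by
  ext s t
  refine (Fintype.sum_of_injective e he _ _ (fun u hu => ?_) fun _ => rfl).symm
  have hlt : u < e s := not_le.mp fun hle => hu (hrange hle ⟨s, rfl⟩)
  exact mul_eq_zero_of_left (hU hlt) _

theorem blockTriangular_adjugate {R ι α : Type*} [CommRing R] [Fintype ι] [DecidableEq ι]
    [LinearOrder α] {M : Matrix ι ι R} {b : ι → α} (hM : M.BlockTriangular b)
    (hdet : IsUnit M.det) : M.adjugate.BlockTriangular b := by
  have : Invertible M := invertibleOfIsUnitDet M hdet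
  have adjugate_eq : M.adjugate = M.det • M⁻¹ := by
    rw [inv_def, smul_smul, Ring.mul_inverse_cancel _ hdet, one_smul]
  intro s t hlt
  rw [adjugate_eq, Matrix.smul_apply, blockTriangular_inv_of_blockTriangular hM hlt, smul_zero]

section UpperUnitriangular

variable {R ι κ o : Type*} [CommRing R] [Fintype ι] [LinearOrder ι] {g : Matrix ι ι R}

theorem det_eq_one_of_upperUnitriangular (hg : g.IsUpperTriangular) (hdiag : ∀ s, g s s = 1) :
    g.det = 1 := by
  simp only [det_of_isUpperTriangular hg, hdiag, Finset.prod_const_one]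

theorem isUpperTriangular_adjugate_of_upperUnitriangular (hg : g.IsUpperTriangular)
    (hdiag : ∀ s, g s s = 1) : g.adjugate.IsUpperTriangular :=
  blockTriangular_adjugate hg (det_eq_one_of_upperUnitriangular hg hdiag ▸ isUnit_one)

variable [Fintype κ] [LinearOrder κ]

theorem det_submatrix_adjugate_eq_one (hg : g.IsUpperTriangular) (hdiag : ∀ s, g s s = 1)
    {e : κ → ι} (he : StrictMono e) (hrange : IsUpperSet (Set.range e)) :
    (g.adjugate.submatrix e e).det = 1 := by
  have corner_det : (g.submatrix e e).det = 1 :=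
    det_eq_one_of_upperUnitriangular (fun _ _ hlt => hg (he hlt)) fun s => hdiag (e s)
  have corner_mul : g.adjugate.submatrix e e * g.submatrix e e = 1 := by
    rw [← submatrix_mul_of_isUpperSet_range
      (isUpperTriangular_adjugate_of_upperUnitriangular hg hdiag) he.injective hrange,
      adjugate_mul, det_eq_one_of_upperUnitriangular hg hdiag, one_smul,
      submatrix_one _ he.injective]
  simpa only [det_mul, corner_det, mul_one, det_one] using congrArg det corner_mul

theorem det_fromRows_submatrix_adjugate_mul [Fintype o] [DecidableEq o]
    (hg : g.IsUpperTriangular) (hdiag : ∀ s, g s s = 1) {e : κ → ι} (he : StrictMono e)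
    (hrange : IsUpperSet (Set.range e)) {c : o ⊕ κ → ι}
    (hc : ∀ s t, g s (c t) = (1 : Matrix ι ι R) s (c t)) (X : Matrix ι ι R) (r : o → ι) :
    (fromRows ((X * g).submatrix r c) ((X * g).adjugate.submatrix e c)).det =
      (fromRows (X.submatrix r c) (X.adjugate.submatrix e c)).det := by
  have hU : g.adjugate.IsUpperTriangular :=
    isUpperTriangular_adjugate_of_upperUnitriangular hg hdiag
  have factor : fromRows ((X * g).submatrix r c) ((X * g).adjugate.submatrix e c) =
      fromBlocks 1 0 0 (g.adjugate.submatrix e e) *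
        fromRows (X.submatrix r c) (X.adjugate.submatrix e c) := by
    rw [fromBlocks_mul_fromRows, Matrix.one_mul, Matrix.zero_mul, Matrix.zero_mul, add_zero,
      zero_add, submatrix_mul_eq_left X hc, adjugate_mul_distrib,
      submatrix_mul_of_isUpperSet_range hU he.injective hrange]
  rw [factor, det_mul, det_fromBlocks_zero₂₁, det_one, one_mul,
    det_submatrix_adjugate_eq_one hg hdiag he hrange, one_mul]

end UpperUnitriangular

section Fin

variable {R : Type*} [CommRing R] {n p j k : ℕ}

/-- The embedding of `Fin k` onto the last `k` indices of `Fin n`, used to select terminal rows. -/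
def lastEmb (h : k ≤ n) (s : Fin k) : Fin n :=
  ⟨n - k + s, by omega⟩

theorem strictMono_lastEmb (h : k ≤ n) : StrictMono (lastEmb h) :=
  fun _ _ hlt => Nat.add_lt_add_left hlt _

theorem isUpperSet_range_lastEmb (h : k ≤ n) : IsUpperSet (Set.range (lastEmb h)) := by
  rintro _ b hle ⟨s, rfl⟩
  have hle_val : n - k + (s : ℕ) ≤ b := hle
  exact ⟨⟨b - (n - k), by omega⟩, Fin.ext (Nat.add_sub_cancel' (by omega))⟩

/-- The matrix `Y_{ij}` attached to `X`, with `p` standing for `i' = n + 1 - i`: the last `p` rows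
of `X` on top of the last `j - p` rows of its adjugate, both on the first `j` columns. -/
def stackedMatrix (hpj : p ≤ j) (hj : j ≤ n) (X : Matrix (Fin n) (Fin n) R) :
    Matrix (Fin j) (Fin j) R :=
  of fun s t =>
    if hs : (s : ℕ) < p then
      X (lastEmb (hpj.trans hj) ⟨s, hs⟩) (Fin.castLE hj t)
    else
      X.adjugate (lastEmb ((Nat.sub_le j p).trans hj) ⟨s - p, by omega⟩) (Fin.castLE hj t)

/-- The identification of the row indices of `stackedMatrix` with those of its two blocks. -/
def blockEquiv (hpj : p ≤ j) : Fin p ⊕ Fin (j - p) ≃ Fin j :=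
  finSumFinEquiv.trans (finCongr (Nat.add_sub_cancel' hpj))

theorem stackedMatrix_submatrix_blockEquiv (hpj : p ≤ j) (hj : j ≤ n)
    (X : Matrix (Fin n) (Fin n) R) :
    (stackedMatrix hpj hj X).submatrix (blockEquiv hpj) (blockEquiv hpj) =
      fromRows (X.submatrix (lastEmb (hpj.trans hj)) (Fin.castLE hj ∘ blockEquiv hpj))
        (X.adjugate.submatrix (lastEmb ((Nat.sub_le j p).trans hj))
          (Fin.castLE hj ∘ blockEquiv hpj)) := by
  ext (s | s) t <;> simp [stackedMatrix, blockEquiv]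

end Fin

end StackedMatrix

open StackedMatrix in
theorem stmt16_general {R : Type*} [CommRing R] {n p j : ℕ} (hpj : p ≤ j) (hj : j ≤ n)
    (X g : Matrix (Fin n) (Fin n) R) (hdiag : ∀ s, g s s = 1)
    (hlow : ∀ s t : Fin n, t < s → g s t = 0)
    (hsupp : ∀ s t : Fin n, s ≠ t → g s t ≠ 0 → j ≤ (t : ℕ)) :
    (stackedMatrix hpj hj (X * g)).det = (stackedMatrix hpj hj X).det := by
  have first_columns : ∀ (s : Fin n) (t : Fin j),
      g s (Fin.castLE hj t) = (1 : Matrix (Fin n) (Fin n) R) s (Fin.castLE hj t) := by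
    intro s t
    rcases eq_or_ne s (Fin.castLE hj t) with rfl | hne
    · rw [hdiag, Matrix.one_apply_eq]
    · rw [Matrix.one_apply_ne hne]
      exact not_imp_comm.mp (hsupp _ _ hne) t.isLt.not_ge
  rw [← Matrix.det_submatrix_equiv_self (blockEquiv hpj),
    ← Matrix.det_submatrix_equiv_self (blockEquiv hpj) (stackedMatrix hpj hj X),
    stackedMatrix_submatrix_blockEquiv, stackedMatrix_submatrix_blockEquiv]
  exact det_fromRows_submatrix_adjugate_mul (fun s t => hlow s t) hdiag (strictMono_lastEmb _)
    (isUpperSet_range_lastEmb _) (fun s t => first_columns s (blockEquiv hpj t)) X _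

/-- 1-based i, j with i + j > n + 1, i' = n + 1 - i: the determinant of the
j×j matrix Y_{ij}(X), whose first i' rows are the last i' rows of X on columns 1,…,j and
whose remaining j - i' rows are the last j - i' rows of adjugate(X) on columns 1,…,j, is
unchanged under X ↦ X·g for every upper unitriangular g with off-diagonal support in
columns > j. -/
theorem stmt16 {K : Type*} [Field K] {n : ℕ} (i j : ℕ)
    (hi1 : 1 ≤ i) (hi2 : i ≤ n) (hj : j ≤ n) (hij : n + 1 < i + j)
    (X g : Matrix (Fin n) (Fin n) K) (hX : IsUnit X.det)
    (hdiag : ∀ s, g s s = 1)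
    (hlow : ∀ s t : Fin n, t < s → g s t = 0)
    (hsupp : ∀ s t : Fin n, s ≠ t → g s t ≠ 0 → j ≤ (t : ℕ)) :
    (Matrix.of (fun s t : Fin j =>
      if hs : s.val < n + 1 - i then
        (X * g) (⟨n - (n + 1 - i) + s.val, by have := s.isLt; omega⟩ : Fin n)
                (⟨t.val, by have := t.isLt; omega⟩ : Fin n)
      else
        (X * g).adjugate
          (⟨n - (j - (n + 1 - i)) + (s.val - (n + 1 - i)), by have := s.isLt; omega⟩ : Fin n)
          (⟨t.val, by have := t.isLt; omega⟩ : Fin n))).det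
    = (Matrix.of (fun s t : Fin j =>
      if hs : s.val < n + 1 - i then
        X (⟨n - (n + 1 - i) + s.val, by have := s.isLt; omega⟩ : Fin n)
          (⟨t.val, by have := t.isLt; omega⟩ : Fin n)
      else
        X.adjugate
          (⟨n - (j - (n + 1 - i)) + (s.val - (n + 1 - i)), by have := s.isLt; omega⟩ : Fin n)
          (⟨t.val, by have := t.isLt; omega⟩ : Fin n))).det :=
  stmt16_general (by omega) hj X g hdiag hlow hsupp
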